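/- Achievability of zero-error linear compression: Let x be a random vector in ℝ^m with arbitrary distribution. If n > inf{lower modified Minkowski dimension of U : U ⊆ ℝ^m, P[x ∈ U] = 1}, then for Lebesgue almost all matrices A ∈ ℝ^{n×m} there exists a Borel measurable decoder g_A : ℝ^n → ℝ^m with P[g_A(A x) ≠ x] = 0. -/

import Mathlib

open MeasureTheory Filter Set Metric Bornology Matrix Pointwise
noncomputable def coveringNumber {E : Type*} [PseudoMetricSpace E] (U : Set E) (ρ : ℝ) : ℕ :=
  sInf {k : ℕ | ∃ t : Finset E, t.card = k ∧ U ⊆ ⋃ x ∈ t, Metric.ball x ρ}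

noncomputable def lowerMinkDim {E : Type*} [PseudoMetricSpace E] (U : Set E) : ℝ :=
  liminf (fun ρ : ℝ => Real.log (coveringNumber U ρ) / Real.log (1 / ρ)) (nhdsWithin 0 (Set.Ioi 0))

noncomputable def upperMinkDim {E : Type*} [PseudoMetricSpace E] (U : Set E) : ℝ :=
  limsup (fun ρ : ℝ => Real.log (coveringNumber U ρ) / Real.log (1 / ρ)) (nhdsWithin 0 (Set.Ioi 0))

def IsDimCover {E : Type*} [PseudoMetricSpace E] [MeasurableSpace E] (U : Set E) (V : ℕ → Set E) : Prop :=
  (∀ i, (V i).Nonempty ∧ IsBounded (V i) ∧ MeasurableSet (V i)) ∧ U ⊆ ⋃ i, V i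

noncomputable def lowerModMinkDim {E : Type*} [PseudoMetricSpace E] [MeasurableSpace E] (U : Set E) : ℝ :=
  sInf {d : ℝ | ∃ V : ℕ → Set E, IsDimCover U V ∧ d = ⨆ i, lowerMinkDim (V i)}

noncomputable def upperModMinkDim {E : Type*} [PseudoMetricSpace E] [MeasurableSpace E] (U : Set E) : ℝ :=
  sInf {d : ℝ | ∃ V : ℕ → Set E, IsDimCover U V ∧ d = ⨆ i, upperMinkDim (V i)}
noncomputable def matVec {n m : ℕ} (A : Fin n → Fin m → ℝ) (x : EuclideanSpace ℝ (Fin m)) :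
    EuclideanSpace ℝ (Fin n) :=
  (EuclideanSpace.equiv (Fin n) ℝ).symm (Matrix.mulVec (Matrix.of A) (EuclideanSpace.equiv (Fin m) ℝ x))

/-!
Fix a point `x` and a bounded set `V` of lower Minkowski dimension less than `n`. If
`matVec A u = matVec A x` for some `u` in a `ρ`-ball with `‖u - x‖ ≥ ε`, then every row of `A` lies
in a slab of width `O(ρ)`, so in a bounded set of matrices this happens with measure `O(ρ ^ n)`.
Summing over the balls of an optimal cover of `V` and letting `ρ` tend to `0` along suitable scales,
almost no `A` identifies `x` with another point of `V`; this passes to countable unions of such `V`.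

By Fubini's theorem, almost every `A` then has this property at almost every `x`. The measurability
needed for this holds because the union can be replaced by a σ-compact subset of full measure, and
the pairs `(A, x)` at which a σ-compact set has a collision form a σ-compact set.
For such an `A`, encoding is injective on a Borel set of full measure, where the Lusin-Souslin
theorem provides a Borel inverse.
-/

section CoveringNumber

variable {E : Type*} [PseudoMetricSpace E] {U : Set E} {ρ : ℝ}

lemma coveringNumber_le_card {t : Finset E} (h : U ⊆ ⋃ y ∈ t, ball y ρ) :
    coveringNumber U ρ ≤ t.card :=
  Nat.sInf_le ⟨t, rfl, h⟩

lemma exists_finset_card_eq_coveringNumber [ProperSpace E] (hU : IsBounded U) (hρ : 0 < ρ) :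
    ∃ t : Finset E, t.card = coveringNumber U ρ ∧ U ⊆ ⋃ y ∈ t, ball y ρ := by
  obtain ⟨s, -, hs, hcov⟩ :=
    exists_finite_cover_balls_of_isCompact_closure hU.isCompact_closure hρ
  lift s to Finset E using hs
  exact Nat.sInf_mem (s := {k : ℕ | ∃ t : Finset E, t.card = k ∧ U ⊆ ⋃ y ∈ t, ball y ρ})
    ⟨s.card, s, rfl, hcov⟩

lemma exists_finset_separated_cover [ProperSpace E] (hU : IsBounded U) (hρ : 0 < ρ) :
    ∃ t : Finset E, ↑t ⊆ U ∧ (t : Set E).Pairwise (ρ < dist · ·) ∧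
      U ⊆ ⋃ y ∈ t, closedBall y ρ := by
  lift ρ to NNReal using hρ.le
  obtain ⟨N, -, hN, hNU⟩ := exists_finite_isCover_of_isCompact_closure
    (half_pos (NNReal.coe_pos.1 hρ)).ne' hU.isCompact_closure
  have hpack : packingNumber ρ U ≠ ⊤ := by
    have h := (packingNumber_two_mul_le_externalCoveringNumber (ρ / 2) U).trans
      hNU.externalCoveringNumber_le_encard
    rw [mul_div_cancel₀ ρ two_ne_zero] at h
    exact ne_top_of_le_ne_top hN.encard_lt_top.ne h
  have hfin : (maximalSeparatedSet ρ U).Finite := by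
    rw [← encard_ne_top_iff, encard_maximalSeparatedSet hpack]
    exact hpack
  refine ⟨hfin.toFinset, ?_, ?_, ?_⟩
  · simpa using maximalSeparatedSet_subset
  · intro a ha b hb hab
    have h : (ρ : ENNReal) < edist a b := isSeparated_maximalSeparatedSet
      (hfin.mem_toFinset.1 ha) (hfin.mem_toFinset.1 hb) hab
    rw [edist_nndist, ENNReal.coe_lt_coe] at h
    exact h
  · simpa using (isCover_maximalSeparatedSet hpack).subset_iUnion_closedBall

end CoveringNumber

section VolumetricBound

variable {E : Type*} [NormedAddCommGroup E] [NormedSpace ℝ E] [FiniteDimensional ℝ E]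

open Module

-- The balls of radius `ρ / 2` around the points are disjoint and lie in the ball of radius
-- `R + ρ / 2`.
lemma card_mul_pow_le_of_pairwise_lt_dist {t : Finset E} {R ρ : ℝ} (hρ : 0 < ρ) (hR : 0 < R)
    (ht : ↑t ⊆ ball (0 : E) R) (hsep : (t : Set E).Pairwise (ρ < dist · ·)) :
    t.card * (ρ / 2) ^ finrank ℝ E ≤ (R + ρ / 2) ^ finrank ℝ E := by
  borelize E
  let μ : Measure E := Measure.addHaar
  have hdisj : (t : Set E).PairwiseDisjoint fun y => ball y (ρ / 2) := fun a ha b hb hab =>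
    ball_disjoint_ball (by linarith [hsep ha hb hab])
  have hsub : ⋃ y ∈ t, ball y (ρ / 2) ⊆ ball 0 (R + ρ / 2) := iUnion₂_subset fun y hy =>
    ball_subset_ball' (by linarith [mem_ball.1 (ht hy)])
  have hμ : ENNReal.ofReal (t.card * (ρ / 2) ^ finrank ℝ E) * μ (ball 0 1) ≤
      ENNReal.ofReal ((R + ρ / 2) ^ finrank ℝ E) * μ (ball 0 1) := by
    calc ENNReal.ofReal (t.card * (ρ / 2) ^ finrank ℝ E) * μ (ball 0 1)
        = ∑ y ∈ t, μ (ball y (ρ / 2)) := by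
          simp only [μ.addHaar_ball_of_pos _ (half_pos hρ), Finset.sum_const, nsmul_eq_mul]
          rw [ENNReal.ofReal_mul (Nat.cast_nonneg _), ENNReal.ofReal_natCast, mul_assoc]
      _ = μ (⋃ y ∈ t, ball y (ρ / 2)) :=
          (measure_biUnion_finset hdisj fun _ _ => measurableSet_ball).symm
      _ ≤ μ (ball 0 (R + ρ / 2)) := measure_mono hsub
      _ = ENNReal.ofReal ((R + ρ / 2) ^ finrank ℝ E) * μ (ball 0 1) :=
          μ.addHaar_ball_of_pos _ (by positivity)
  exact (ENNReal.ofReal_le_ofReal_iff (by positivity)).1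
    ((ENNReal.mul_le_mul_iff_left (measure_ball_pos _ _ one_pos).ne' measure_ball_lt_top.ne).1 hμ)

lemma coveringNumber_le_pow_finrank {U : Set E} {R ρ : ℝ} (hρ : 0 < ρ) (hR : 0 < R)
    (hU : U ⊆ ball 0 R) :
    (coveringNumber U ρ : ℝ) ≤ ((4 * R + ρ) / ρ) ^ finrank ℝ E := by
  have := FiniteDimensional.proper_real E
  obtain ⟨t, htU, hsep, hcov⟩ := exists_finset_separated_cover (isBounded_ball.subset hU)
    (half_pos hρ)
  have hcov' : U ⊆ ⋃ y ∈ t, ball y ρ :=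
    hcov.trans (iUnion₂_mono fun y _ => closedBall_subset_ball (half_lt_self hρ))
  have hcard := card_mul_pow_le_of_pairwise_lt_dist (half_pos hρ) hR (htU.trans hU) hsep
  calc (coveringNumber U ρ : ℝ) ≤ t.card := mod_cast coveringNumber_le_card hcov'
    _ ≤ (R + ρ / 2 / 2) ^ finrank ℝ E / (ρ / 2 / 2) ^ finrank ℝ E :=
      (le_div_iff₀ (by positivity)).2 hcard
    _ = ((4 * R + ρ) / ρ) ^ finrank ℝ E := by
      rw [← div_pow]
      congr 1
      field_simp
      ring

end VolumetricBound

section LowerMinkDim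

variable {E : Type*}

/-- The exponent `s` for which `coveringNumber U ρ = (1 / ρ) ^ s`; its lower limit as `ρ` decreases
to `0` is `lowerMinkDim U`. It is `0` if the covering number is `0`. -/
noncomputable def coveringExponent [PseudoMetricSpace E] (U : Set E) (ρ : ℝ) : ℝ :=
  Real.log (coveringNumber U ρ) / Real.log (1 / ρ)

lemma log_one_div_pos {ρ : ℝ} (hρ : ρ ∈ Ioo 0 1) : 0 < Real.log (1 / ρ) :=
  Real.log_pos ((one_lt_div hρ.1).2 hρ.2)

lemma isBoundedUnder_ge_coveringExponent [PseudoMetricSpace E] (U : Set E) :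
    IsBoundedUnder (· ≥ ·) (nhdsWithin 0 (Ioi 0)) (coveringExponent U) := by
  refine isBoundedUnder_of_eventually_ge (a := 0) ?_
  filter_upwards [Ioo_mem_nhdsGT zero_lt_one] with ρ hρ
  exact div_nonneg (Real.log_natCast_nonneg _) (log_one_div_pos hρ).le

variable [NormedAddCommGroup E] [NormedSpace ℝ E] [FiniteDimensional ℝ E] {U : Set E}

open Module

lemma coveringExponent_le {R ρ : ℝ} (hρ : ρ ∈ Ioo 0 1) (hR : 0 < R) (hU : U ⊆ ball 0 R) :
    coveringExponent U ρ ≤ finrank ℝ E * (Real.log (4 * R + ρ) / Real.log (1 / ρ) + 1) := by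
  have hρ0 : 0 < ρ := hρ.1
  have hlog : 0 < Real.log (1 / ρ) := log_one_div_pos hρ
  have hratio : 1 ≤ (4 * R + ρ) / ρ := (one_le_div hρ0).2 (by linarith)
  have hN : Real.log (coveringNumber U ρ) ≤
      finrank ℝ E * (Real.log (4 * R + ρ) + Real.log (1 / ρ)) := by
    rw [← Real.log_mul (by positivity) (by positivity), mul_one_div, ← Real.log_pow]
    rcases (coveringNumber U ρ).eq_zero_or_pos with h0 | h0
    · simpa [h0] using Real.log_nonneg (one_le_pow₀ hratio)
    · exact Real.log_le_log (mod_cast h0) (coveringNumber_le_pow_finrank hρ0 hR hU)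
  rw [coveringExponent, div_le_iff₀ hlog]
  refine hN.trans_eq ?_
  field_simp

lemma tendsto_log_add_div_log_one_div {c : ℝ} (hc : 0 < c) :
    Tendsto (fun ρ : ℝ => Real.log (c + ρ) / Real.log (1 / ρ)) (nhdsWithin 0 (Ioi 0)) (nhds 0) := by
  have hnum : Tendsto (fun ρ : ℝ => Real.log (c + ρ)) (nhdsWithin 0 (Ioi 0))
      (nhds (Real.log c)) := by
    have h : ContinuousAt (fun ρ : ℝ => Real.log (c + ρ)) 0 :=
      ContinuousAt.log (by fun_prop) (by simpa using hc.ne')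
    simpa using h.tendsto.mono_left nhdsWithin_le_nhds
  have hden : Tendsto (fun ρ : ℝ => Real.log (1 / ρ)) (nhdsWithin 0 (Ioi 0)) atTop := by
    simpa only [one_div, Function.comp_def] using
      Real.tendsto_log_atTop.comp tendsto_inv_nhdsGT_zero
  exact hnum.div_atTop hden

lemma exists_tendsto_finrank_coveringExponent_le (hU : IsBounded U) :
    ∃ h : ℝ → ℝ, Tendsto h (nhdsWithin 0 (Ioi 0)) (nhds (finrank ℝ E)) ∧
      coveringExponent U ≤ᶠ[nhdsWithin 0 (Ioi 0)] h := by
  obtain ⟨R, hR, hUR⟩ := hU.subset_ball_lt 0 (0 : E)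
  refine ⟨fun ρ => finrank ℝ E * (Real.log (4 * R + ρ) / Real.log (1 / ρ) + 1), ?_, ?_⟩
  · simpa using ((tendsto_log_add_div_log_one_div (c := 4 * R) (by positivity)).add_const
      1).const_mul (finrank ℝ E : ℝ)
  · filter_upwards [Ioo_mem_nhdsGT zero_lt_one] with ρ hρ
    exact coveringExponent_le hρ hR hUR

-- Without this bound the real-valued `liminf` defining `lowerMinkDim U` could be a junk value.
lemma isBoundedUnder_le_coveringExponent (hU : IsBounded U) :
    IsBoundedUnder (· ≤ ·) (nhdsWithin 0 (Ioi 0)) (coveringExponent U) := by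
  obtain ⟨h, hlim, hle⟩ := exists_tendsto_finrank_coveringExponent_le hU
  exact hlim.isBoundedUnder_le.mono_le hle

lemma lowerMinkDim_le_finrank (hU : IsBounded U) : lowerMinkDim U ≤ finrank ℝ E := by
  obtain ⟨h, hlim, hle⟩ := exists_tendsto_finrank_coveringExponent_le hU
  calc lowerMinkDim U ≤ liminf h (nhdsWithin 0 (Ioi 0)) :=
        liminf_le_liminf hle (isBoundedUnder_ge_coveringExponent U)
          hlim.isBoundedUnder_le.isCoboundedUnder_ge
    _ = finrank ℝ E := hlim.liminf_eq

lemma frequently_coveringNumber_le_rpow (hU : IsBounded U) {s : ℝ} (hs : lowerMinkDim U < s) :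
    ∃ᶠ ρ in nhdsWithin (0 : ℝ) (Ioi 0), (coveringNumber U ρ : ℝ) ≤ ρ ^ (-s) := by
  have hfreq : ∃ᶠ ρ in nhdsWithin (0 : ℝ) (Ioi 0), coveringExponent U ρ < s :=
    frequently_lt_of_liminf_lt (isBoundedUnder_le_coveringExponent hU).isCoboundedUnder_ge hs
  refine (hfreq.and_eventually (Ioo_mem_nhdsGT zero_lt_one)).mono fun ρ ⟨hlt, hρ⟩ => ?_
  have hρ0 : 0 < ρ := hρ.1
  rcases (coveringNumber U ρ).eq_zero_or_pos with h0 | h0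
  · rw [h0, Nat.cast_zero]
    positivity
  · have hlog := (div_lt_iff₀ (log_one_div_pos hρ)).1 hlt
    rw [← Real.log_le_log_iff (mod_cast h0) (by positivity), Real.log_rpow hρ0]
    rw [one_div, Real.log_inv] at hlog
    linarith

-- For `lowerMinkDim U < d < s` there are arbitrarily small `ρ` at which `U` is covered by at most
-- `ρ ^ (-d)` balls of radius `ρ`, so that the measure is at most `C * ρ ^ (s - d)`.
lemma measure_biUnion_eq_zero_of_lowerMinkDim_lt {Y : Type*} [MeasurableSpace Y] {ν : Measure Y}
    (hU : IsBounded U) {s : ℝ} (hs : lowerMinkDim U < s) {B : E → Set Y} {C : ENNReal}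
    (hC : C ≠ ⊤)
    (hB : ∀ y, ∀ ρ > 0, ν (⋃ u ∈ U ∩ ball y ρ, B u) ≤ C * ENNReal.ofReal (ρ ^ s)) :
    ν (⋃ u ∈ U, B u) = 0 := by
  have := FiniteDimensional.proper_real E
  obtain ⟨d, hd, hds⟩ := exists_between hs
  have hlim : Tendsto (fun ρ : ℝ => C * ENNReal.ofReal (ρ ^ (s - d)))
      (nhdsWithin 0 (Ioi 0)) (nhds 0) := by
    have h := (Real.continuous_rpow_const (sub_nonneg.2 hds.le)).tendsto 0
    rw [Real.zero_rpow (sub_pos.2 hds).ne'] at h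
    simpa using ENNReal.Tendsto.const_mul
      (ENNReal.tendsto_ofReal (h.mono_left nhdsWithin_le_nhds)) (Or.inr hC)
  refine le_antisymm (ge_of_tendsto_of_frequently hlim ?_) zero_le
  refine ((frequently_coveringNumber_le_rpow hU hd).and_eventually self_mem_nhdsWithin).mono ?_
  rintro ρ ⟨hN, hρ : 0 < ρ⟩
  obtain ⟨t, htN, htU⟩ := exists_finset_card_eq_coveringNumber hU hρ
  calc ν (⋃ u ∈ U, B u) ≤ ν (⋃ y ∈ t, ⋃ u ∈ U ∩ ball y ρ, B u) := by
        refine measure_mono (iUnion₂_subset fun u hu => ?_)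
        obtain ⟨y, hy, huy⟩ := mem_iUnion₂.1 (htU hu)
        exact (subset_biUnion_of_mem (u := B) (show u ∈ U ∩ ball y ρ from ⟨hu, huy⟩)).trans
          (subset_biUnion_of_mem (u := fun y => ⋃ u ∈ U ∩ ball y ρ, B u) hy)
    _ ≤ ∑ y ∈ t, ν (⋃ u ∈ U ∩ ball y ρ, B u) := measure_biUnion_finset_le _ _
    _ ≤ ∑ _y ∈ t, C * ENNReal.ofReal (ρ ^ s) := Finset.sum_le_sum fun y _ => hB y ρ hρ
    _ = C * ENNReal.ofReal (coveringNumber U ρ * ρ ^ s) := by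
      rw [Finset.sum_const, nsmul_eq_mul, htN, ENNReal.ofReal_mul (Nat.cast_nonneg _),
        ENNReal.ofReal_natCast, mul_left_comm]
    _ ≤ C * ENNReal.ofReal (ρ ^ (-d) * ρ ^ s) := by gcongr
    _ = C * ENNReal.ofReal (ρ ^ (s - d)) := by rw [← Real.rpow_add hρ, neg_add_eq_sub]

end LowerMinkDim

section KernelMeasure

variable {ι κ : Type*} [Fintype ι] [Fintype κ]

open Fintype

lemma exists_norm_eq_abs_apply {v : ι → ℝ} (hv : v ≠ 0) : ∃ j, ‖v‖ = |v j| := by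
  have : Nonempty ι := let ⟨i, _⟩ := Function.ne_iff.1 hv; ⟨i⟩
  obtain ⟨j, -, hj⟩ := Finset.exists_mem_eq_sup' Finset.univ_nonempty fun i => ‖v i‖₊
  exact ⟨j, by rw [Pi.norm_def, ← Finset.sup'_eq_sup Finset.univ_nonempty, hj, coe_nnnorm,
    Real.norm_eq_abs]⟩

lemma abs_dotProduct_le (a v : ι → ℝ) : |a ⬝ᵥ v| ≤ card ι * (‖a‖ * ‖v‖) :=
  calc |a ⬝ᵥ v| ≤ ∑ k, |a k * v k| := Finset.abs_sum_le_sum_abs _ _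
    _ ≤ ∑ _k : ι, ‖a‖ * ‖v‖ := Finset.sum_le_sum fun k _ => by
      rw [abs_mul]
      exact mul_le_mul (norm_le_pi_norm a k) (norm_le_pi_norm v k) (abs_nonneg _) (norm_nonneg _)
    _ = card ι * (‖a‖ * ‖v‖) := by simp

lemma norm_mulVec_le (A : Matrix κ ι ℝ) (v : ι → ℝ) :
    ‖A *ᵥ v‖ ≤ card ι * (‖Matrix.of.symm A‖ * ‖v‖) := by
  refine (pi_norm_le_iff_of_nonneg (by positivity)).2 fun i => (abs_dotProduct_le _ _).trans ?_
  gcongr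
  exact norm_le_pi_norm (Matrix.of.symm A) i

lemma det_updateRow_one [DecidableEq ι] (j : ι) (v : ι → ℝ) :
    ((1 : Matrix ι ι ℝ).updateRow j v).det = v j := by
  rw [← Matrix.cramer_transpose_apply, Matrix.transpose_one, Matrix.cramer_one,
    Module.End.one_apply]

lemma volume_Icc_neg_update [DecidableEq ι] (j : ι) {r δ : ℝ} (hr : 0 ≤ r) (hδ : 0 ≤ δ) :
    volume (Icc (-Function.update (fun _ : ι => r) j δ) (Function.update (fun _ => r) j δ)) =
      ENNReal.ofReal (2 * δ * (2 * r) ^ (card ι - 1)) := by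
  have hside : ∀ i, ENNReal.ofReal (Function.update (fun _ : ι => r) j δ i -
      (-Function.update (fun _ => r) j δ) i) =
      Function.update (fun _ => ENNReal.ofReal (2 * r)) j (ENNReal.ofReal (2 * δ)) i := by
    intro i
    rcases eq_or_ne i j with rfl | hij
    · simp [two_mul]
    · simp [hij, two_mul]
  rw [Real.volume_Icc_pi, Finset.prod_congr rfl fun i _ => hside i,
    Finset.prod_update_of_mem (Finset.mem_univ j), Finset.prod_const,
    ← ENNReal.ofReal_pow (by positivity), ← ENNReal.ofReal_mul (by positivity)]
  simp [Finset.card_sdiff_of_subset]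

lemma volume_slab_le {v : ι → ℝ} (hv : v ≠ 0) {r δ : ℝ} (hr : 0 ≤ r) (hδ : 0 ≤ δ) :
    volume {a : ι → ℝ | ‖a‖ ≤ r ∧ |a ⬝ᵥ v| ≤ δ} ≤
      ENNReal.ofReal (‖v‖⁻¹ * (2 * δ * (2 * r) ^ (card ι - 1))) := by
  classical
  obtain ⟨j, hj⟩ := exists_norm_eq_abs_apply hv
  -- Replacing the `j`-th coordinate `a j` by `a ⬝ᵥ v` maps the slab into a box.
  let L := Matrix.toLin' ((1 : Matrix ι ι ℝ).updateRow j v)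
  have hdet : LinearMap.det L = v j := by rw [LinearMap.det_toLin', det_updateRow_one]
  have hvj : v j ≠ 0 := abs_pos.1 (hj ▸ norm_pos_iff.2 hv)
  let c : ι → ℝ := Function.update (fun _ => r) j δ
  have hsub : {a : ι → ℝ | ‖a‖ ≤ r ∧ |a ⬝ᵥ v| ≤ δ} ⊆ L ⁻¹' Icc (-c) c := by
    rintro a ⟨ha, hav⟩
    suffices ∀ k, |L a k| ≤ c k from
      ⟨fun k => (abs_le.1 (this k)).1, fun k => (abs_le.1 (this k)).2⟩
    intro k
    rcases eq_or_ne k j with rfl | hk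
    · simpa [L, c, Matrix.mulVec, dotProduct_comm v] using hav
    · simpa [L, c, Matrix.mulVec, Matrix.updateRow_ne hk, Matrix.one_apply, dotProduct, hk] using
        (norm_le_pi_norm a k).trans ha
  calc volume {a : ι → ℝ | ‖a‖ ≤ r ∧ |a ⬝ᵥ v| ≤ δ}
      ≤ volume (L ⁻¹' Icc (-c) c) := measure_mono hsub
    _ = ENNReal.ofReal |(v j)⁻¹| * volume (Icc (-c) c) := by
      rw [Measure.addHaar_preimage_linearMap _ (by rwa [hdet]), hdet]
    _ = ENNReal.ofReal (‖v‖⁻¹ * (2 * δ * (2 * r) ^ (card ι - 1))) := by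
      rw [volume_Icc_neg_update j hr hδ, ← ENNReal.ofReal_mul (abs_nonneg _), abs_inv, hj]

lemma volume_norm_mulVec_le {v : ι → ℝ} (hv : v ≠ 0) {r δ : ℝ} (hr : 0 ≤ r) (hδ : 0 ≤ δ) :
    volume {A : κ → ι → ℝ | ‖A‖ ≤ r ∧ ‖Matrix.of A *ᵥ v‖ ≤ δ} ≤
      ENNReal.ofReal (‖v‖⁻¹ * (2 * δ * (2 * r) ^ (card ι - 1))) ^ card κ := by
  have hprod : {A : κ → ι → ℝ | ‖A‖ ≤ r ∧ ‖Matrix.of A *ᵥ v‖ ≤ δ} =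
      pi univ fun _ => {a : ι → ℝ | ‖a‖ ≤ r ∧ |a ⬝ᵥ v| ≤ δ} := by
    ext A
    simp [pi_norm_le_iff_of_nonneg hr, pi_norm_le_iff_of_nonneg hδ, Matrix.mulVec, forall_and]
  rw [hprod, volume_pi_pi, Finset.prod_const, Finset.card_univ]
  gcongr
  exact volume_slab_le hv hr hδ

lemma volume_exists_mem_ball_mulVec_eq_zero_le (y : ι → ℝ) {r ε ρ : ℝ} (hr : 0 ≤ r) (hε : 0 < ε)
    (hρ : 0 ≤ ρ) :
    volume {A : κ → ι → ℝ | ‖A‖ ≤ r ∧ ∃ u ∈ ball y ρ, ε ≤ ‖u‖ ∧ Matrix.of A *ᵥ u = 0} ≤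
      ENNReal.ofReal (ε⁻¹ * (2 * (card ι * (r * (2 * ρ))) * (2 * r) ^ (card ι - 1))) ^ card κ := by
  by_cases hy : ∃ w ∈ ball y ρ, ε ≤ ‖w‖
  · obtain ⟨w, hwy, hw⟩ := hy
    have hwpos : 0 < ‖w‖ := hε.trans_le hw
    -- If `A` kills some `u` in the ball, then `A w = A (w - u)` is small.
    have hsub : {A : κ → ι → ℝ | ‖A‖ ≤ r ∧ ∃ u ∈ ball y ρ, ε ≤ ‖u‖ ∧ Matrix.of A *ᵥ u = 0} ⊆
        {A | ‖A‖ ≤ r ∧ ‖Matrix.of A *ᵥ w‖ ≤ card ι * (r * (2 * ρ))} := by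
      rintro A ⟨hA, u, hu, -, hAu⟩
      have hwu : ‖w - u‖ ≤ 2 * ρ := by
        rw [← dist_eq_norm]
        linarith [dist_triangle_right w u y, mem_ball.1 hwy, mem_ball.1 hu]
      refine ⟨hA, ?_⟩
      calc ‖Matrix.of A *ᵥ w‖ = ‖Matrix.of A *ᵥ (w - u)‖ := by rw [Matrix.mulVec_sub, hAu, sub_zero]
        _ ≤ card ι * (‖A‖ * ‖w - u‖) := norm_mulVec_le _ _
        _ ≤ card ι * (r * (2 * ρ)) := by gcongr
    refine (measure_mono hsub).trans
      ((volume_norm_mulVec_le (norm_pos_iff.1 hwpos) hr (by positivity)).trans ?_)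
    gcongr
  · have hempty : {A : κ → ι → ℝ | ‖A‖ ≤ r ∧ ∃ u ∈ ball y ρ, ε ≤ ‖u‖ ∧ Matrix.of A *ᵥ u = 0} = ∅ :=
      eq_empty_of_forall_notMem fun _ ⟨_, u, huy, hu, _⟩ => hy ⟨u, huy, hu⟩
    rw [hempty, measure_empty]
    exact zero_le

end KernelMeasure

section MatVec

variable {m n : ℕ}

lemma matVec_eq_matVec_iff {A : Fin n → Fin m → ℝ} {u x : EuclideanSpace ℝ (Fin m)} :
    matVec A u = matVec A x ↔ Matrix.of A *ᵥ (u - x).ofLp = 0 := by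
  rw [WithLp.ofLp_sub, Matrix.mulVec_sub, sub_eq_zero]
  exact (EuclideanSpace.equiv (Fin n) ℝ).symm.injective.eq_iff

lemma continuous_matVec :
    Continuous fun p : (Fin n → Fin m → ℝ) × EuclideanSpace ℝ (Fin m) => matVec p.1 p.2 :=
  (EuclideanSpace.equiv (Fin n) ℝ).symm.continuous.comp <|
    Continuous.matrix_mulVec (A := fun p => Matrix.of p.1) continuous_fst <|
      (EuclideanSpace.equiv (Fin m) ℝ).continuous.comp continuous_snd

variable {V : Set (EuclideanSpace ℝ (Fin m))}

lemma volume_exists_mem_matVec_eq_eq_zero (hV : IsBounded V) (hdim : lowerMinkDim V < n)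
    (x : EuclideanSpace ℝ (Fin m)) {r ε : ℝ} (hr : 0 ≤ r) (hε : 0 < ε) :
    volume {A : Fin n → Fin m → ℝ |
      ‖A‖ ≤ r ∧ ∃ u ∈ V, ε ≤ ‖(u - x).ofLp‖ ∧ matVec A u = matVec A x} = 0 := by
  let B (u : EuclideanSpace ℝ (Fin m)) : Set (Fin n → Fin m → ℝ) :=
    {A | ‖A‖ ≤ r ∧ ε ≤ ‖(u - x).ofLp‖ ∧ matVec A u = matVec A x}
  let c : ℝ := ε⁻¹ * (2 * (m * (r * 2)) * (2 * r) ^ (m - 1))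
  have hB : ∀ y, ∀ ρ > 0, volume (⋃ u ∈ V ∩ ball y ρ, B u) ≤
      ENNReal.ofReal c ^ n * ENNReal.ofReal (ρ ^ (n : ℝ)) := by
    intro y ρ hρ
    have hsub : ⋃ u ∈ V ∩ ball y ρ, B u ⊆ {A | ‖A‖ ≤ r ∧
        ∃ w ∈ ball (y - x).ofLp ρ, ε ≤ ‖w‖ ∧ Matrix.of A *ᵥ w = 0} := by
      refine iUnion₂_subset fun u hu A ⟨hA, hux, hAu⟩ =>
        ⟨hA, (u - x).ofLp, ?_, hux, matVec_eq_matVec_iff.1 hAu⟩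
      rw [mem_ball_iff_norm, ← WithLp.ofLp_sub, sub_sub_sub_cancel_right]
      refine lt_of_le_of_lt ?_ (mem_ball_iff_norm.1 hu.2)
      exact (pi_norm_le_iff_of_nonneg (norm_nonneg _)).2 fun k => PiLp.norm_apply_le _ k
    refine (measure_mono hsub).trans
      ((volume_exists_mem_ball_mulVec_eq_zero_le _ hr hε hρ.le).trans_eq ?_)
    rw [Real.rpow_natCast, ENNReal.ofReal_pow hρ.le, ← mul_pow,
      ← ENNReal.ofReal_mul (by positivity), Fintype.card_fin, Fintype.card_fin]
    congr 2
    ring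
  have hunion := measure_biUnion_eq_zero_of_lowerMinkDim_lt hV hdim (by finiteness) hB
  refine measure_mono_null (fun A ⟨hA, u, hu, hux, hAu⟩ => ?_) hunion
  exact mem_iUnion₂.2 ⟨u, hu, hA, hux, hAu⟩

lemma ae_forall_matVec_eq_imp_eq (hV : IsBounded V) (hdim : lowerMinkDim V < n)
    (x : EuclideanSpace ℝ (Fin m)) :
    ∀ᵐ A : Fin n → Fin m → ℝ, ∀ u ∈ V, matVec A u = matVec A x → u = x := by
  have hnull := fun k : ℕ => measure_eq_zero_iff_ae_notMem.1 <|
    volume_exists_mem_matVec_eq_eq_zero hV hdim x k.cast_nonneg (Nat.one_div_pos_of_nat (n := k))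
  filter_upwards [ae_all_iff.2 hnull] with A hA u hu hAu
  by_contra hne
  have hpos : 0 < ‖(u - x).ofLp‖ :=
    norm_pos_iff.2 ((WithLp.ofLp_eq_zero 2).not.2 (sub_ne_zero.2 hne))
  obtain ⟨l, hl⟩ := exists_nat_one_div_lt hpos
  obtain ⟨r, hr⟩ := exists_nat_ge ‖A‖
  refine hA (max l r) ⟨hr.trans (mod_cast le_max_right l r), u, hu, ?_, hAu⟩
  exact (Nat.one_div_le_one_div (le_max_left l r)).trans hl.le

end MatVec

section SigmaCompact

variable {X Y Z : Type*} [TopologicalSpace X] [TopologicalSpace Y]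

lemma measurableSet_of_isSigmaCompact [T2Space X] [MeasurableSpace X] [OpensMeasurableSpace X]
    {s : Set X} (hs : IsSigmaCompact s) : MeasurableSet s := by
  obtain ⟨K, hK, rfl⟩ := hs
  exact MeasurableSet.iUnion fun i => (hK i).measurableSet

lemma isSigmaCompact_prod {s : Set X} {t : Set Y} (hs : IsSigmaCompact s)
    (ht : IsSigmaCompact t) : IsSigmaCompact (s ×ˢ t) := by
  obtain ⟨K, hK, rfl⟩ := hs
  obtain ⟨L, hL, rfl⟩ := ht
  simp_rw [iUnion_prod_const, prod_iUnion]
  exact isSigmaCompact_iUnion _ fun i => isSigmaCompact_iUnion _ fun j =>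
    ((hK i).prod (hL j)).isSigmaCompact

lemma isSigmaCompact_inter_of_isClosed {s t : Set X} (hs : IsSigmaCompact s) (ht : IsClosed t) :
    IsSigmaCompact (s ∩ t) := by
  obtain ⟨K, hK, rfl⟩ := hs
  rw [iUnion_inter]
  exact isSigmaCompact_iUnion _ fun i => ((hK i).inter_right ht).isSigmaCompact

lemma isSigmaCompact_inter_preimage_of_isOpen {E : Type*} [PseudoEMetricSpace E] {s : Set X}
    (hs : IsSigmaCompact s) {f : X → E} (hf : Continuous f) {t : Set E} (ht : IsOpen t) :
    IsSigmaCompact (s ∩ f ⁻¹' t) := by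
  obtain ⟨F, hF, -, rfl, -⟩ := ht.exists_iUnion_isClosed
  rw [preimage_iUnion, inter_iUnion]
  exact isSigmaCompact_iUnion _ fun i =>
    isSigmaCompact_inter_of_isClosed hs ((hF i).preimage hf)

lemma exists_isSigmaCompact_subset_ae_mem [T2Space X] [MeasurableSpace X] [OpensMeasurableSpace X]
    {μ : Measure X} [IsFiniteMeasure μ] [μ.InnerRegularCompactLTTop] {s : Set X}
    (hs : MeasurableSet s) (hμ : ∀ᵐ x ∂μ, x ∈ s) :
    ∃ t ⊆ s, IsSigmaCompact t ∧ ∀ᵐ x ∂μ, x ∈ t := by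
  choose K hKs hK hμK using fun k : ℕ => hs.exists_isCompact_sdiff_lt (measure_ne_top μ s)
    (ENNReal.inv_ne_zero.2 (ENNReal.natCast_ne_top k))
  refine ⟨⋃ k, K k, iUnion_subset hKs, ⟨K, hK, rfl⟩, ?_⟩
  have hdiff : μ (s \ ⋃ k, K k) = 0 := by
    refine le_antisymm (ge_of_tendsto' ENNReal.tendsto_inv_nat_nhds_zero fun k => ?_) zero_le
    exact (measure_mono (sdiff_subset_sdiff_right (subset_iUnion K k))).trans (hμK k).le
  filter_upwards [hμ, measure_eq_zero_iff_ae_notMem.1 hdiff] with x hxs hx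
  by_contra hxK
  exact hx ⟨hxs, hxK⟩

end SigmaCompact

section Decoder

variable {X Y Z : Type*}

/-- The pairs `(y, x)` with `x ∈ s` for which the encoder `f y` maps some point of `s` other than
`x` to `f y x`, so that `x` cannot be decoded from `f y x` on `s`. -/
def collisionSet (f : Y → X → Z) (s : Set X) : Set (Y × X) :=
  {p | p.2 ∈ s ∧ ∃ u ∈ s, f p.1 u = f p.1 p.2 ∧ u ≠ p.2}

lemma injOn_setOf_notMem_collisionSet (f : Y → X → Z) (s : Set X) (y : Y) :
    InjOn (f y) {x | x ∈ s ∧ (y, x) ∉ collisionSet f s} := by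
  rintro u ⟨hu, -⟩ x ⟨hx, hyx⟩ hux
  by_contra hne
  exact hyx ⟨hx, u, hu, hux, hne⟩

variable [TopologicalSpace Z] [T2Space Z]

lemma isSigmaCompact_collisionSet [MetricSpace X] [TopologicalSpace Y] [SigmaCompactSpace Y]
    {f : Y → X → Z} (hf : Continuous fun p : Y × X => f p.1 p.2) {s : Set X}
    (hs : IsSigmaCompact s) : IsSigmaCompact (collisionSet f s) := by
  let T : Set ((Y × X) × X) := ((univ ×ˢ s) ×ˢ s) ∩ {q | f q.1.1 q.2 = f q.1.1 q.1.2} ∩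
    (fun q => (q.2, q.1.2)) ⁻¹' (diagonal X)ᶜ
  have hT : IsSigmaCompact T := by
    refine isSigmaCompact_inter_preimage_of_isOpen (isSigmaCompact_inter_of_isClosed
      (isSigmaCompact_prod (isSigmaCompact_prod isSigmaCompact_univ hs) hs) ?_)
      (by fun_prop) isClosed_diagonal.isOpen_compl
    exact isClosed_eq (hf.comp (by fun_prop : Continuous fun q : (Y × X) × X => (q.1.1, q.2)))
      (hf.comp continuous_fst)
  have himage : collisionSet f s = Prod.fst '' T := by
    ext p
    constructor
    · rintro ⟨hp, u, hu, hfu, hne⟩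
      exact ⟨(p, u), ⟨⟨⟨⟨mem_univ _, hp⟩, hu⟩, hfu⟩, hne⟩, rfl⟩
    · rintro ⟨⟨p, u⟩, ⟨⟨⟨⟨-, hp⟩, hu⟩, hfu⟩, hne⟩, rfl⟩
      exact ⟨hp, u, hu, hfu, hne⟩
  rw [himage]
  exact hT.image continuous_fst

variable [MeasurableSpace X] [MeasurableSpace Z] [BorelSpace Z]

-- By the Lusin-Souslin theorem, `f` maps the Borel subsets of `s` to Borel sets.
lemma exists_measurable_leftInvOn [TopologicalSpace X] [PolishSpace X] [BorelSpace X] [Nonempty X]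
    {f : X → Z} {s : Set X} (hf : ContinuousOn f s) (hs : MeasurableSet s) (hinj : InjOn f s) :
    ∃ g : Z → X, Measurable g ∧ LeftInvOn g f s := by
  obtain ⟨g, hg, hgf⟩ := (hf.measurableEmbedding hs hinj).exists_measurable_extend
    measurable_subtype_coe fun _ => inferInstance
  exact ⟨g, hg, fun x hx => congrFun hgf ⟨x, hx⟩⟩

variable [MeasurableSpace Y]

theorem ae_exists_measurable_decoder [TopologicalSpace X] [PolishSpace X] [BorelSpace X]
    [Nonempty X] [TopologicalSpace Y] [T2Space Y] [SigmaCompactSpace Y] [OpensMeasurableSpace Y]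
    {μ : Measure X} [IsFiniteMeasure μ] {ν : Measure Y} [SFinite ν]
    {f : Y → X → Z} (hf : Continuous fun p : Y × X => f p.1 p.2)
    {s : Set X} (hs : MeasurableSet s) (hμs : ∀ᵐ x ∂μ, x ∈ s)
    (hinj : ∀ᵐ x ∂μ, ∀ᵐ y ∂ν, ∀ u ∈ s, f y u = f y x → u = x) :
    ∀ᵐ y ∂ν, ∃ g : Z → X, Measurable g ∧ ∀ᵐ x ∂μ, g (f y x) = x := by
  let _ := TopologicalSpace.upgradeIsCompletelyMetrizable X
  obtain ⟨t, hts, ht, hμt⟩ := exists_isSigmaCompact_subset_ae_mem hs hμs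
  have hcoll : MeasurableSet (collisionSet f t) :=
    measurableSet_of_isSigmaCompact (isSigmaCompact_collisionSet hf ht)
  have hae : ∀ᵐ x ∂μ, ∀ᵐ y ∂ν, (y, x) ∉ collisionSet f t := by
    filter_upwards [hinj] with x hx
    filter_upwards [hx] with y hy
    rintro ⟨-, u, hu, hux, hne⟩
    exact hne (hy u (hts hu) hux)
  filter_upwards [(Measure.ae_ae_comm (p := fun y x => (y, x) ∉ collisionSet f t)
    hcoll.compl).2 hae] with y hy
  obtain ⟨g, hg, hgf⟩ := exists_measurable_leftInvOn
    (hf.comp (Continuous.prodMk_right y)).continuousOn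
    ((measurableSet_of_isSigmaCompact ht).inter (measurable_prodMk_left hcoll).compl)
    (injOn_setOf_notMem_collisionSet f t y)
  refine ⟨g, hg, ?_⟩
  filter_upwards [hμt, hy] with x hxt hxy
  exact hgf ⟨hxt, hxy⟩

end Decoder

section LowerModMinkDim

variable {E : Type*} [NormedAddCommGroup E] [MeasurableSpace E] [OpensMeasurableSpace E]

lemma exists_isDimCover (U : Set E) : ∃ V : ℕ → Set E, IsDimCover U V := by
  refine ⟨fun i => closedBall 0 i, fun i => ⟨⟨0, by simp⟩, isBounded_closedBall,
    measurableSet_closedBall⟩, ?_⟩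
  rw [iUnion_closedBall_nat]
  exact subset_univ U

lemma exists_isDimCover_lowerMinkDim_lt [NormedSpace ℝ E] [FiniteDimensional ℝ E] {U : Set E}
    {d : ℝ} (hU : lowerModMinkDim U < d) :
    ∃ V : ℕ → Set E, IsDimCover U V ∧ ∀ i, lowerMinkDim (V i) < d := by
  obtain ⟨W, hW⟩ := exists_isDimCover U
  obtain ⟨_, ⟨V, hV, rfl⟩, hVd⟩ := exists_lt_of_csInf_lt (by exact ⟨_, W, hW, rfl⟩) hU
  have hbdd : BddAbove (range fun i => lowerMinkDim (V i)) :=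
    ⟨Module.finrank ℝ E, forall_mem_range.2 fun i => lowerMinkDim_le_finrank (hV.1 i).2.1⟩
  exact ⟨V, hV, fun i => (le_ciSup hbdd i).trans_lt hVd⟩

end LowerModMinkDim

lemma ae_map_mem_of_measure_preimage_eq_one {Ω X : Type*} [MeasurableSpace Ω] [MeasurableSpace X]
    {P : Measure Ω} [IsProbabilityMeasure P] {x : Ω → X} (hx : AEMeasurable x P) {U S : Set X}
    (hU : P (x ⁻¹' U) = 1) (hS : MeasurableSet S) (hUS : U ⊆ S) : ∀ᵐ y ∂P.map x, y ∈ S := by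
  have := Measure.isProbabilityMeasure_map hx
  refine (mem_ae_iff_prob_eq_one hS).2 (le_antisymm prob_le_one ?_)
  rw [Measure.map_apply_of_aemeasurable hx hS, ← hU]
  exact measure_mono (preimage_mono hUS)

theorem achievability_zero_error {m n : ℕ} {Ω : Type*} [MeasureSpace Ω]
    [IsProbabilityMeasure (volume : Measure Ω)]
    (x : Ω → EuclideanSpace ℝ (Fin m)) (hx : Measurable x)
    (hdim : sInf {d : ℝ | ∃ U : Set (EuclideanSpace ℝ (Fin m)),
      volume (x ⁻¹' U) = 1 ∧ d = lowerModMinkDim U} < n) :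
    ∀ᵐ A : Fin n → Fin m → ℝ,
      ∃ g : EuclideanSpace ℝ (Fin n) → EuclideanSpace ℝ (Fin m), Measurable g ∧
        volume {ω : Ω | g (matVec A (x ω)) ≠ x ω} = 0 := by
  obtain ⟨_, ⟨U, hxU, rfl⟩, hUn⟩ := exists_lt_of_csInf_lt (by exact ⟨_, univ, by simp, rfl⟩) hdim
  obtain ⟨V, ⟨hV, hUV⟩, hVn⟩ := exists_isDimCover_lowerMinkDim_lt hUn
  have hVmeas : MeasurableSet (⋃ i, V i) := MeasurableSet.iUnion fun i => (hV i).2.2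
  have hxV : ∀ᵐ y ∂Measure.map x volume, y ∈ ⋃ i, V i :=
    ae_map_mem_of_measure_preimage_eq_one hx.aemeasurable hxU hVmeas hUV
  have hinj : ∀ y, ∀ᵐ A : Fin n → Fin m → ℝ, ∀ u ∈ ⋃ i, V i, matVec A u = matVec A y → u = y := by
    intro y
    filter_upwards [ae_all_iff.2 fun i => ae_forall_matVec_eq_imp_eq (hV i).2.1 (hVn i) y]
      with A hA u hu
    obtain ⟨i, hi⟩ := mem_iUnion.1 hu
    exact hA i u hi
  filter_upwards [ae_exists_measurable_decoder continuous_matVec hVmeas hxV (ae_of_all _ hinj)]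
    with A ⟨g, hg, hgA⟩
  exact ⟨g, hg, ae_iff.1 (ae_of_ae_map hx.aemeasurable hgA)⟩
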